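/- Let H ∈ C²(𝕋ⁿ × ℝⁿ) be coercive (H(x,p) → +∞ as |p| → ∞ uniformly in x) and satisfy (A4) and (A5), and assume the ergodic equation H(x,Du(x)) = 0 on 𝕋ⁿ admits a continuous viscosity solution (normalization H̄ = 0). For each ε > 0 let u^ε be a continuous viscosity solution of ε u^ε(x) + H(x, Du^ε(x)) = 0 on 𝕋ⁿ. Then there exists a continuous function u⁰ on 𝕋ⁿ such that u^ε converges uniformly on 𝕋ⁿ to u⁰ as ε → 0⁺, and u⁰ is a viscosity solution of H(x,Du⁰(x)) = 0 on 𝕋ⁿ. -/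

import Mathlib

open Filter Set
open scoped Topology

noncomputable section

/-- Functions on the torus `𝕋ⁿ` are identified with `ℤⁿ`-periodic functions on `ℝⁿ`. -/
def ZnPeriodic {n : ℕ} (u : EuclideanSpace ℝ (Fin n) → ℝ) : Prop :=
  ∀ (x : EuclideanSpace ℝ (Fin n)) (k : Fin n → ℤ),
    u (x + (EuclideanSpace.equiv (Fin n) ℝ).symm (fun i => (k i : ℝ))) = u x

/-- Viscosity subsolution of `E(x, u(x), Du(x)) = 0` on `ℝⁿ`. -/
def ViscSub {n : ℕ} (E : EuclideanSpace ℝ (Fin n) → ℝ → EuclideanSpace ℝ (Fin n) → ℝ)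
    (u : EuclideanSpace ℝ (Fin n) → ℝ) : Prop :=
  ∀ φ : EuclideanSpace ℝ (Fin n) → ℝ, ContDiff ℝ 1 φ →
    ∀ x₀ : EuclideanSpace ℝ (Fin n), IsLocalMax (u - φ) x₀ →
      E x₀ (u x₀) (gradient φ x₀) ≤ 0

/-- Viscosity supersolution of `E(x, u(x), Du(x)) = 0` on `ℝⁿ`. -/
def ViscSuper {n : ℕ} (E : EuclideanSpace ℝ (Fin n) → ℝ → EuclideanSpace ℝ (Fin n) → ℝ)
    (u : EuclideanSpace ℝ (Fin n) → ℝ) : Prop :=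
  ∀ φ : EuclideanSpace ℝ (Fin n) → ℝ, ContDiff ℝ 1 φ →
    ∀ x₀ : EuclideanSpace ℝ (Fin n), IsLocalMin (u - φ) x₀ →
      0 ≤ E x₀ (u x₀) (gradient φ x₀)

/-- Viscosity solution. -/
def ViscSol {n : ℕ} (E : EuclideanSpace ℝ (Fin n) → ℝ → EuclideanSpace ℝ (Fin n) → ℝ)
    (u : EuclideanSpace ℝ (Fin n) → ℝ) : Prop :=
  ViscSub E u ∧ ViscSuper E u

/-!
Under (A4) the function `e^{l₀ H(x, ·)}` is convex. Hence, if `v` is a limit of the `u^δ` along some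
sequence and `0 < ε < δ`, doubling variables on the combination `(1 - t) v + t u^δ` of subsolutions
against the supersolution `u^ε` gives, at a maximum point `z` of `(1 - t) v + t u^δ - u^ε`,

  `e^{-l₀ ε u^ε(z)} ≤ (1 - t) + t e^{-l₀ δ u^δ(z)}`.

With `t = ε / δ` the constant terms cancel and the linear ones are `-l₀ ε u^ε(z)` and
`-l₀ ε u^δ(z)`, so `u^δ(z) ≤ u^ε(z) + O(δ)` uniformly in `ε`, and therefore
`v ≤ u^ε + ‖v - u^δ‖ + O(δ)` everywhere. Letting first `ε → 0`, then `δ → 0`, any two limits of the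
family coincide. Comparison with an ergodic solution bounds the family, coercivity makes it
equi-Lipschitz, so it is precompact and converges.
-/

section Auxiliary

theorem isClosed_setOf_exists_mem_of_isCompact {X Y : Type*} [TopologicalSpace X]
    [TopologicalSpace Y] {C : Set Y} (hC : IsCompact C) {S : Set (X × Y)} (hS : IsClosed S) :
    IsClosed {x | ∃ y ∈ C, (x, y) ∈ S} := by
  have : CompactSpace C := isCompact_iff_compactSpace.1 hC
  convert isClosedMap_fst_of_compactSpace (X := X) (Y := C) _
    (hS.preimage (continuous_id.prodMap continuous_subtype_val)) using 1
  ext x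
  simp

theorem exists_isMax_sub_of_tendsto_cocompact {X Y : Type*} [TopologicalSpace X]
    [TopologicalSpace Y] [Nonempty Y] {K : Set X} (hK : IsCompact K) (hKne : K.Nonempty)
    {f : X × Y → ℝ} (hf : Continuous f) (hfb : BddAbove (range f))
    {ψ : Y → ℝ} (hψ : Continuous ψ) (hψlim : Tendsto ψ (cocompact Y) atTop) :
    ∃ x ∈ K, ∃ y, ∀ x' ∈ K, ∀ y', f (x', y') - ψ y' ≤ f (x, y) - ψ y := by
  have : CompactSpace K := isCompact_iff_compactSpace.1 hK
  have : Nonempty K := hKne.to_subtype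
  obtain ⟨M, hM⟩ := hfb
  have hlim : Tendsto (fun q : K × Y => f (q.1, q.2) - ψ q.2) (cocompact (K × Y)) atBot := by
    rw [← coprod_cocompact, cocompact_eq_bot, Filter.coprod, comap_bot, bot_sup_eq]
    exact tendsto_atBot_mono (fun q => sub_le_sub_right (hM (mem_range_self _)) (ψ q.2))
      (tendsto_const_nhds.add_atBot (tendsto_neg_atTop_atBot.comp (hψlim.comp tendsto_comap)))
  obtain ⟨q, hq⟩ := Continuous.exists_forall_ge (by fun_prop) hlim
  exact ⟨q.1, q.1.2, q.2, fun x' hx' y' => hq (⟨x', hx'⟩, y')⟩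

theorem tendsto_sum_mul_norm_sq_cocompact_atTop {ι E : Type*} [Fintype ι] [NormedAddCommGroup E]
    [ProperSpace E] {μ : ι → ℝ} (hμ : ∀ i, 0 < μ i) :
    Tendsto (fun p : ι → E => ∑ i, μ i * ‖p i‖ ^ 2) (cocompact (ι → E)) atTop := by
  rw [← coprodᵢ_cocompact, Filter.coprodᵢ, tendsto_iSup]
  intro i
  have hi : Tendsto (fun x : E => μ i * ‖x‖ ^ 2) (cocompact E) atTop :=
    ((tendsto_pow_atTop two_ne_zero).comp tendsto_norm_cocompact_atTop).const_mul_atTop (hμ i)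
  refine tendsto_atTop_mono (fun p => ?_) (hi.comp tendsto_comap)
  exact Finset.single_le_sum (f := fun j => μ j * ‖p j‖ ^ 2)
    (fun j _ => mul_nonneg (hμ j).le (by positivity)) (Finset.mem_univ i)

theorem eventually_exists_isLocalMax_of_tendstoUniformly {ι X : Type*} [PseudoMetricSpace X]
    [ProperSpace X] {l : Filter ι} {g : ι → X → ℝ} {g₀ : X → ℝ} (hg : ∀ i, Continuous (g i))
    (hlim : TendstoUniformly g g₀ l) {x₀ : X}
    (hmax : ∀ᶠ x in 𝓝 x₀, g₀ x + dist x x₀ ^ 2 ≤ g₀ x₀) {U : Set X} (hU : U ∈ 𝓝 x₀) :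
    ∀ᶠ i in l, ∃ x ∈ U, IsLocalMax (g i) x := by
  obtain ⟨r, hr, hball⟩ := Metric.nhds_basis_closedBall.mem_iff.1 (inter_mem hmax hU)
  filter_upwards [Metric.tendstoUniformly_iff.1 hlim (r ^ 2 / 2) (by positivity)] with i hi
  have hsphere : ∀ x ∈ Metric.closedBall x₀ r \ Metric.ball x₀ r, g i x < g i x₀ := by
    intro x hx
    have hdist : dist x x₀ = r := le_antisymm hx.1 (not_lt.1 hx.2)
    have hdrop : g₀ x + dist x x₀ ^ 2 ≤ g₀ x₀ := (hball hx.1).1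
    have hx_close := abs_lt.1 (hi x)
    have hx₀_close := abs_lt.1 (hi x₀)
    rw [hdist] at hdrop
    linarith [hx_close.1, hx₀_close.2]
  obtain ⟨x, hx, hloc⟩ := (isCompact_closedBall x₀ r).exists_isLocalMax_mem_open
    Metric.ball_subset_closedBall (hg i).continuousOn (Metric.mem_closedBall_self hr.le) hsphere
    Metric.isOpen_ball
  exact ⟨x, (hball (Metric.ball_subset_closedBall hx)).2, hloc⟩

theorem sub_sq_le_of_exp_neg_mul_le {a b t : ℝ} (ht : 0 < t) (ha : |a| ≤ 1)
    (h : Real.exp (-(t * b)) ≤ (1 - t) + t * Real.exp (-a)) : a - a ^ 2 ≤ b := by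
  have hlower : -(t * b) + 1 ≤ Real.exp (-(t * b)) := Real.add_one_le_exp _
  have hupper : Real.exp (-a) ≤ 1 - a + a ^ 2 := by
    have := (abs_le.1 (Real.abs_exp_sub_one_sub_id_le (x := -a) (by rwa [abs_neg]))).2
    linarith [neg_sq a]
  have : t * (a - a ^ 2) ≤ t * b := by linarith [mul_le_mul_of_nonneg_left hupper ht.le]
  exact le_of_mul_le_mul_left this ht

theorem convexOn_exp_mul_of_hasDerivAt {f f' f'' : ℝ → ℝ} {c : ℝ}
    (hf : ∀ r, HasDerivAt f (f' r) r) (hf' : ∀ r, HasDerivAt f' (f'' r) r)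
    (h : ∀ r, 0 ≤ c ^ 2 * f' r ^ 2 + c * f'' r) :
    ConvexOn ℝ univ fun r => Real.exp (c * f r) := by
  have hexp : ∀ r, HasDerivAt (fun r => Real.exp (c * f r)) (Real.exp (c * f r) * (c * f' r)) r :=
    fun r => ((hf r).const_mul c).exp
  have hexp' : ∀ r, HasDerivAt (fun r => Real.exp (c * f r) * (c * f' r))
      (Real.exp (c * f r) * (c * f' r) * (c * f' r) + Real.exp (c * f r) * (c * f'' r)) r :=
    fun r => (hexp r).mul ((hf' r).const_mul c)
  have hderiv := funext fun r => (hexp r).deriv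
  refine convexOn_univ_of_deriv2_nonneg (fun r => (hexp r).differentiableAt)
    (hderiv ▸ fun r => (hexp' r).differentiableAt) fun r => ?_
  rw [Function.iterate_succ_apply, Function.iterate_one, hderiv, (hexp' r).deriv]
  calc 0 ≤ Real.exp (c * f r) * (c ^ 2 * f' r ^ 2 + c * f'' r) :=
        mul_nonneg (Real.exp_pos _).le (h r)
    _ = _ := by ring

theorem convexOn_exp_mul_of_contDiff {E : Type*} [NormedAddCommGroup E] [NormedSpace ℝ E]
    {f : E → ℝ} (hf : ContDiff ℝ 2 f) {c : ℝ}
    (h : ∀ p v, 0 ≤ c ^ 2 * fderiv ℝ f p v ^ 2 + c * fderiv ℝ (fderiv ℝ f) p v v) :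
    ConvexOn ℝ univ fun p => Real.exp (c * f p) := by
  have hdf : Differentiable ℝ f := hf.differentiable two_ne_zero
  have hddf : Differentiable ℝ (fderiv ℝ f) :=
    (hf.fderiv_right (m := 1) le_rfl).differentiable one_ne_zero
  refine ⟨convex_univ, fun p _ q _ a b ha hb hab => ?_⟩
  have hline : ∀ r : ℝ, HasDerivAt (fun r : ℝ => p + r • (q - p)) (q - p) r := fun r => by
    simpa using ((hasDerivAt_id r).smul_const (q - p)).const_add p
  have hconv : ConvexOn ℝ univ fun r : ℝ => Real.exp (c * f (p + r • (q - p))) :=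
    convexOn_exp_mul_of_hasDerivAt
      (fun r => (hdf _).hasFDerivAt.comp_hasDerivAt r (hline r))
      (fun r => (ContinuousLinearMap.apply ℝ ℝ (q - p)).hasFDerivAt.comp_hasDerivAt r
        ((hddf _).hasFDerivAt.comp_hasDerivAt r (hline r)))
      (fun r => h _ _)
  have hcombo : p + b • (q - p) = a • p + b • q := by
    rw [← eq_sub_iff_add_eq] at hab
    rw [hab]
    module
  simpa [hcombo] using hconv.2 (mem_univ 0) (mem_univ 1) ha hb hab

end Auxiliary

section Gradient

variable {E : Type*} [NormedAddCommGroup E] [InnerProductSpace ℝ E]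

theorem contDiff_const_mul_norm_sub_sq (c : ℝ) (y : E) :
    ContDiff ℝ 1 fun x => c * ‖x - y‖ ^ 2 :=
  contDiff_const.mul ((contDiff_id.sub contDiff_const).norm_sq ℝ)

variable [CompleteSpace E]

theorem hasGradientAt_const_mul_norm_sub_sq (c : ℝ) (y x : E) :
    HasGradientAt (fun x => c * ‖x - y‖ ^ 2) ((2 * c) • (x - y)) x := by
  rw [hasGradientAt_iff_hasFDerivAt]
  refine ((((hasFDerivAt_id (𝕜 := ℝ) x).sub_const y).norm_sq).const_mul c).congr_fderiv ?_
  ext v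
  simp
  ring

theorem hasGradientAt_add {f g : E → ℝ} {f' g' x : E} (hf : HasGradientAt f f' x)
    (hg : HasGradientAt g g' x) : HasGradientAt (fun y => f y + g y) (f' + g') x := by
  rw [hasGradientAt_iff_hasFDerivAt] at *
  exact map_add (InnerProductSpace.toDual ℝ E) f' g' ▸ hf.add hg

theorem hasGradientAt_sum {ι : Type*} (s : Finset ι) {f : ι → E → ℝ} {f' : ι → E} {x : E}
    (hf : ∀ i ∈ s, HasGradientAt (f i) (f' i) x) :
    HasGradientAt (fun y => ∑ i ∈ s, f i y) (∑ i ∈ s, f' i) x := by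
  simp only [hasGradientAt_iff_hasFDerivAt] at *
  exact map_sum (InnerProductSpace.toDual ℝ E) f' s ▸ HasFDerivAt.fun_sum hf

theorem gradient_neg (f : E → ℝ) (x : E) : gradient (-f) x = -gradient f x := by
  simp [gradient, fderiv_neg]

theorem continuous_gradient {f : E → ℝ} (hf : ContDiff ℝ 1 f) : Continuous (gradient f) :=
  (InnerProductSpace.toDual ℝ E).symm.continuous.comp (hf.continuous_fderiv one_ne_zero)

end Gradient

section Lipschitz

variable {E : Type*} [NormedAddCommGroup E]

/-- A smooth approximation `√(‖x - y‖² + κ²)` of the distance to `y`: a test function for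
Lipschitz estimates. -/
def smoothDist (κ : ℝ) (y x : E) : ℝ := √(‖x - y‖ ^ 2 + κ ^ 2)

theorem norm_sub_le_smoothDist (κ : ℝ) (y x : E) : ‖x - y‖ ≤ smoothDist κ y x :=
  Real.le_sqrt_of_sq_le (le_add_of_nonneg_right (sq_nonneg κ))

theorem smoothDist_le {κ : ℝ} (hκ : 0 ≤ κ) (y x : E) : smoothDist κ y x ≤ ‖x - y‖ + κ :=
  Real.sqrt_le_iff.2 ⟨by positivity, by nlinarith [norm_nonneg (x - y)]⟩

theorem smoothDist_sq (κ : ℝ) (y x : E) : smoothDist κ y x ^ 2 = ‖x - y‖ ^ 2 + κ ^ 2 :=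
  Real.sq_sqrt (by positivity)

theorem smoothDist_pos {κ : ℝ} (hκ : 0 < κ) (y x : E) : 0 < smoothDist κ y x :=
  Real.sqrt_pos.2 (by positivity)

theorem tendsto_smoothDist_cocompact_atTop [ProperSpace E] (κ : ℝ) (y : E) :
    Tendsto (smoothDist κ y) (cocompact E) atTop :=
  tendsto_atTop_mono (norm_sub_le_smoothDist κ y) (tendsto_norm_cocompact_atTop.comp
    (Homeomorph.subRight y).isClosedEmbedding.tendsto_cocompact)

variable [InnerProductSpace ℝ E]

theorem contDiff_smoothDist {κ : ℝ} (hκ : 0 < κ) (y : E) : ContDiff ℝ 1 (smoothDist κ y) :=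
  (((contDiff_id.sub contDiff_const).norm_sq ℝ).add contDiff_const).sqrt fun x => by positivity

theorem hasGradientAt_const_mul_smoothDist [CompleteSpace E] {κ : ℝ} (hκ : 0 < κ) (c : ℝ)
    (y x : E) :
    HasGradientAt (fun x => c * smoothDist κ y x) ((c / smoothDist κ y x) • (x - y)) x := by
  rw [hasGradientAt_iff_hasFDerivAt]
  have hsq : ‖x - y‖ ^ 2 + κ ^ 2 ≠ 0 := by positivity
  refine (((((hasFDerivAt_id (𝕜 := ℝ) x).sub_const y).norm_sq.add_const (κ ^ 2)).sqrt
    hsq).const_mul c).congr_fderiv ?_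
  ext v
  simp [smoothDist]
  ring

variable [ProperSpace E] {u : E → ℝ} {R : ℝ}

theorem exists_norm_sub_le_forall_le_add_of_norm_gradient_le (hu : Continuous u)
    (hub : BddAbove (range u)) (hR : 0 < R)
    (hgrad : ∀ φ, ContDiff ℝ 1 φ → ∀ x, IsLocalMax (u - φ) x → ‖gradient φ x‖ ≤ R)
    {κ : ℝ} (hκ : 0 < κ) (y : E) :
    ∃ z, ‖z - y‖ ≤ κ ∧ ∀ x, u x ≤ u z + 2 * R * (‖x - y‖ + κ) := by
  have hφ : ContDiff ℝ 1 fun x => 2 * R * smoothDist κ y x :=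
    contDiff_const.mul (contDiff_smoothDist hκ y)
  obtain ⟨M, hM⟩ := hub
  have hdist : Tendsto (fun x => 2 * R * smoothDist κ y x) (cocompact E) atTop :=
    (tendsto_smoothDist_cocompact_atTop κ y).const_mul_atTop (by positivity)
  have hlim : Tendsto (fun x => u x - 2 * R * smoothDist κ y x) (cocompact E) atBot :=
    tendsto_atBot_mono (fun x => sub_le_sub_right (hM (mem_range_self x)) _)
      (tendsto_const_nhds.add_atBot (tendsto_neg_atTop_atBot.comp hdist))
  obtain ⟨z, hz⟩ : ∃ z, ∀ x, u x - 2 * R * smoothDist κ y x ≤ u z - 2 * R * smoothDist κ y z :=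
    (hu.sub hφ.continuous).exists_forall_ge hlim
  have hpos := smoothDist_pos hκ y z
  have hslope : 2 * R * ‖z - y‖ ≤ R * smoothDist κ y z := by
    have h := hgrad _ hφ z (.of_forall hz)
    rwa [(hasGradientAt_const_mul_smoothDist hκ _ y z).gradient, norm_smul, Real.norm_eq_abs,
      abs_of_nonneg (by positivity), div_mul_eq_mul_div, div_le_iff₀ hpos] at h
  refine ⟨z, ?_, fun x => ?_⟩
  · have hle : 2 * ‖z - y‖ ≤ smoothDist κ y z := le_of_mul_le_mul_left (by linarith) hR
    have hsq : (2 * ‖z - y‖) ^ 2 ≤ ‖z - y‖ ^ 2 + κ ^ 2 := by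
      rw [← smoothDist_sq]
      gcongr
    exact le_of_sq_le_sq (by nlinarith [sq_nonneg ‖z - y‖]) hκ.le
  · have hup : 2 * R * smoothDist κ y x ≤ 2 * R * (‖x - y‖ + κ) := by
      gcongr
      exact smoothDist_le hκ.le y x
    have hlow : 0 ≤ 2 * R * smoothDist κ y z := by positivity
    linarith [hz x]

theorem lipschitzWith_of_norm_gradient_le (hu : Continuous u) (hub : BddAbove (range u))
    (hR : 0 < R)
    (hgrad : ∀ φ, ContDiff ℝ 1 φ → ∀ x, IsLocalMax (u - φ) x → ‖gradient φ x‖ ≤ R) :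
    LipschitzWith (2 * R).toNNReal u := by
  refine LipschitzWith.of_le_add_mul' (2 * R) fun x y => ?_
  choose z hz_near hz_max using fun k : ℕ =>
    exists_norm_sub_le_forall_le_add_of_norm_gradient_le hu hub hR hgrad
      (Nat.one_div_pos_of_nat (α := ℝ) (n := k)) y
  have hκ := tendsto_one_div_add_atTop_nhds_zero_nat (𝕜 := ℝ)
  have hz : Tendsto z atTop (𝓝 y) :=
    tendsto_iff_norm_sub_tendsto_zero.2
      (squeeze_zero (fun _ => norm_nonneg _) hz_near hκ)
  have hlim := ((hu.tendsto y).comp hz).add ((hκ.const_add ‖x - y‖).const_mul (2 * R))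
  rw [add_zero, ← dist_eq_norm] at hlim
  exact ge_of_tendsto' hlim fun k => by
    simpa only [dist_eq_norm, Function.comp_apply] using hz_max k x

end Lipschitz

section Torus

variable {n : ℕ}

/-- The vector of `ℝⁿ` with integer coordinates `k`. -/
def latticeVec (k : Fin n → ℤ) : EuclideanSpace ℝ (Fin n) :=
  (EuclideanSpace.equiv (Fin n) ℝ).symm fun i => (k i : ℝ)

theorem exists_add_latticeVec_mem_closedBall (x : EuclideanSpace ℝ (Fin n)) :
    ∃ k, x + latticeVec k ∈ Metric.closedBall (0 : EuclideanSpace ℝ (Fin n)) √n := by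
  refine ⟨fun i => -⌊x i⌋, ?_⟩
  have hfract : ∀ i, (x + latticeVec fun i => -⌊x i⌋) i = Int.fract (x i) := fun i => by
    simp [latticeVec, Int.fract, sub_eq_add_neg]
  rw [mem_closedBall_zero_iff, EuclideanSpace.norm_eq]
  refine Real.sqrt_le_sqrt ?_
  calc ∑ i, ‖(x + latticeVec fun i => -⌊x i⌋) i‖ ^ 2 ≤ ∑ _i : Fin n, (1 : ℝ) := by
        refine Finset.sum_le_sum fun i _ => ?_
        rw [hfract, Real.norm_of_nonneg (Int.fract_nonneg _)]
        exact pow_le_one₀ (Int.fract_nonneg _) (Int.fract_lt_one _).le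
    _ = n := by simp

variable {u : EuclideanSpace ℝ (Fin n) → ℝ}

theorem ZnPeriodic.exists_abs_le (hper : ZnPeriodic u) (hu : Continuous u) :
    ∃ B, ∀ x, |u x| ≤ B := by
  obtain ⟨B, hB⟩ := (isCompact_closedBall (0 : EuclideanSpace ℝ (Fin n)) √n
    ).exists_bound_of_continuousOn hu.continuousOn
  refine ⟨B, fun x => ?_⟩
  obtain ⟨k, hk⟩ := exists_add_latticeVec_mem_closedBall x
  rw [← hper x k]
  exact hB _ hk

end Torus

local notation "𝔼" n:max => EuclideanSpace ℝ (Fin n)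

section Viscosity

variable {n : ℕ} {F : 𝔼 n → ℝ → 𝔼 n → ℝ} {v φ : 𝔼 n → ℝ} {x g : 𝔼 n}

/-- A viscosity subsolution on the torus: continuous, `ℤⁿ`-periodic and a viscosity subsolution
on `ℝⁿ`. -/
structure IsTorusSubsolution (F : 𝔼 n → ℝ → 𝔼 n → ℝ) (v : 𝔼 n → ℝ) : Prop where
  continuous : Continuous v
  periodic : ZnPeriodic v
  viscSub : ViscSub F v

/-- A viscosity supersolution on the torus: continuous, `ℤⁿ`-periodic and a viscosity
supersolution on `ℝⁿ`. -/
structure IsTorusSupersolution (F : 𝔼 n → ℝ → 𝔼 n → ℝ) (v : 𝔼 n → ℝ) : Prop where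
  continuous : Continuous v
  periodic : ZnPeriodic v
  viscSuper : ViscSuper F v

theorem ViscSub.le_zero_of_hasGradientAt (hv : ViscSub F v) (hφ : ContDiff ℝ 1 φ)
    (hg : HasGradientAt φ g x) (hmax : ∀ y, v y - φ y ≤ v x - φ x) : F x (v x) g ≤ 0 :=
  hg.gradient ▸ hv φ hφ x (.of_forall hmax)

theorem ViscSuper.zero_le_of_hasGradientAt (hv : ViscSuper F v) (hφ : ContDiff ℝ 1 φ)
    (hg : HasGradientAt φ g x) (hmin : ∀ y, v x - φ x ≤ v y - φ y) : 0 ≤ F x (v x) g :=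
  hg.gradient ▸ hv φ hφ x (.of_forall hmin)

end Viscosity

section Doubling

variable {n : ℕ} {ι : Type*} [Fintype ι] {μ : ι → ℝ} {v : ι → 𝔼 n → ℝ} {s : 𝔼 n → ℝ}
  {h : ℝ} {z : 𝔼 n} {p : ι → 𝔼 n} {F : ι → 𝔼 n → ℝ → 𝔼 n → ℝ} {G : 𝔼 n → ℝ → 𝔼 n → ℝ}

/-- The functional `∑ μᵢ (vᵢ(yᵢ) - |yᵢ - z|² / (2 h)) - s(z)` of the doubling of variables, in the
coordinates `pᵢ = (yᵢ - z) / h`, which are the gradients produced at a maximum. -/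
def penalizedGap (μ : ι → ℝ) (v : ι → 𝔼 n → ℝ) (s : 𝔼 n → ℝ) (h : ℝ) (z : 𝔼 n) (p : ι → 𝔼 n) :
    ℝ :=
  ∑ i, μ i * (v i (z + h • p i) - h / 2 * ‖p i‖ ^ 2) - s z

/-- What a maximum `(z, p)` of `penalizedGap μ v s h` yields when `v i` is a subsolution of `F i`
and `s` a supersolution of `G`. For `h = 0` the gradients `p i` are all attached to the single
point `z`, a maximum point of `∑ μᵢ vᵢ - s`. -/
structure IsContactPoint (F : ι → 𝔼 n → ℝ → 𝔼 n → ℝ) (G : 𝔼 n → ℝ → 𝔼 n → ℝ) (μ : ι → ℝ)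
    (v : ι → 𝔼 n → ℝ) (s : 𝔼 n → ℝ) (h : ℝ) (z : 𝔼 n) (p : ι → 𝔼 n) : Prop where
  gap_le : ∀ x, ∑ i, μ i * v i x - s x ≤ ∑ i, μ i * v i (z + h • p i) - s z
  sub_le : ∀ i, F i (z + h • p i) (v i (z + h • p i)) (p i) ≤ 0
  super_ge : 0 ≤ G z (s z) (∑ i, μ i • p i)

theorem penalizedGap_add_latticeVec (hv : ∀ i, ZnPeriodic (v i)) (hs : ZnPeriodic s)
    (k : Fin n → ℤ) : penalizedGap μ v s h (z + latticeVec k) p = penalizedGap μ v s h z p := by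
  have hshift : ∀ i, v i (z + latticeVec k + h • p i) = v i (z + h • p i) := fun i => by
    rw [add_right_comm]
    exact hv i _ k
  have hsz : s (z + latticeVec k) = s z := hs z k
  simp only [penalizedGap, hshift, hsz]

theorem exists_isMax_penalizedGap (hμ : ∀ i, 0 < μ i) (hh : 0 < h)
    (hv : ∀ i, Continuous (v i)) (hvper : ∀ i, ZnPeriodic (v i)) (hs : Continuous s)
    (hsper : ZnPeriodic s) :
    ∃ z ∈ Metric.closedBall (0 : 𝔼 n) √n, ∃ p, ∀ z' p',
      penalizedGap μ v s h z' p' ≤ penalizedGap μ v s h z p := by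
  choose B hB using fun i => (hvper i).exists_abs_le (hv i)
  obtain ⟨M, hM⟩ := hsper.exists_abs_le hs
  have hbdd : BddAbove (range fun q : 𝔼 n × (ι → 𝔼 n) =>
      ∑ i, μ i * v i (q.1 + h • q.2 i) - s q.1) := by
    refine ⟨∑ i, μ i * B i + M, ?_⟩
    rintro _ ⟨q, rfl⟩
    have hsum : ∑ i, μ i * v i (q.1 + h • q.2 i) ≤ ∑ i, μ i * B i := Finset.sum_le_sum fun i _ =>
      mul_le_mul_of_nonneg_left (le_of_abs_le (hB i _)) (hμ i).le
    linarith [neg_le_of_abs_le (hM q.1)]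
  obtain ⟨z, hz, p, hmax⟩ := exists_isMax_sub_of_tendsto_cocompact
    (isCompact_closedBall (0 : 𝔼 n) √n) ⟨0, Metric.mem_closedBall_self (Real.sqrt_nonneg _)⟩
    (by fun_prop) hbdd (ψ := fun p => ∑ i, μ i * (h / 2) * ‖p i‖ ^ 2) (by fun_prop)
    (tendsto_sum_mul_norm_sq_cocompact_atTop fun i => mul_pos (hμ i) (half_pos hh))
  have hsplit : ∀ z p, penalizedGap μ v s h z p =
      ∑ i, μ i * v i (z + h • p i) - s z - ∑ i, μ i * (h / 2) * ‖p i‖ ^ 2 := fun z p => by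
    simp only [penalizedGap, mul_sub, Finset.sum_sub_distrib, mul_assoc]
    ring
  refine ⟨z, hz, p, fun z' p' => ?_⟩
  obtain ⟨k, hk⟩ := exists_add_latticeVec_mem_closedBall z'
  rw [← penalizedGap_add_latticeVec hvper hsper k, hsplit, hsplit]
  exact hmax _ hk p'

theorem gap_le_of_isMax_penalizedGap (hμ : ∀ i, 0 ≤ μ i) (hh : 0 ≤ h)
    (hmax : ∀ z' p', penalizedGap μ v s h z' p' ≤ penalizedGap μ v s h z p) (x : 𝔼 n) :
    ∑ i, μ i * v i x - s x ≤ ∑ i, μ i * v i (z + h • p i) - s z := by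
  have hx := hmax x 0
  simp only [penalizedGap, Pi.zero_apply, smul_zero, add_zero, norm_zero, ne_eq, two_ne_zero,
    not_false_eq_true, zero_pow, mul_zero, sub_zero] at hx
  refine hx.trans (sub_le_sub_right (Finset.sum_le_sum fun i _ => ?_) _)
  exact mul_le_mul_of_nonneg_left (sub_le_self _ (by positivity)) (hμ i)

theorem le_of_isMax_penalizedGap {i : ι} (hμ : 0 < μ i)
    (hmax : ∀ z' p', penalizedGap μ v s h z' p' ≤ penalizedGap μ v s h z p) (q : 𝔼 n) :
    v i (z + h • q) - h / 2 * ‖q‖ ^ 2 ≤ v i (z + h • p i) - h / 2 * ‖p i‖ ^ 2 := by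
  classical
  have hq := hmax z (Function.update p i q)
  simp only [penalizedGap, Function.apply_update (fun j (r : 𝔼 n) =>
    μ j * (v j (z + h • r) - h / 2 * ‖r‖ ^ 2)) p i q, Finset.mem_univ,
    Finset.sum_update_of_mem] at hq
  rw [Finset.sum_eq_add_sum_sdiff_singleton_of_mem (Finset.mem_univ i) fun j =>
    μ j * (v j (z + h • p j) - h / 2 * ‖p j‖ ^ 2)] at hq
  exact le_of_mul_le_mul_left (by linarith) hμ

theorem ViscSub.le_zero_of_isMax_penalizedGap {F : 𝔼 n → ℝ → 𝔼 n → ℝ} {i : ι}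
    (hv : ViscSub F (v i)) (hμ : 0 < μ i) (hh : 0 < h)
    (hmax : ∀ z' p', penalizedGap μ v s h z' p' ≤ penalizedGap μ v s h z p) :
    F (z + h • p i) (v i (z + h • p i)) (p i) ≤ 0 := by
  refine hv.le_zero_of_hasGradientAt (contDiff_const_mul_norm_sub_sq (2 * h)⁻¹ z) ?_ fun y => ?_
  · convert hasGradientAt_const_mul_norm_sub_sq (2 * h)⁻¹ z (z + h • p i) using 1
    rw [add_sub_cancel_left, smul_smul]
    field_simp
    rw [one_smul]
  · have hq := le_of_isMax_penalizedGap hμ hmax (h⁻¹ • (y - z))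
    rw [smul_inv_smul₀ hh.ne', add_sub_cancel] at hq
    rw [add_sub_cancel_left]
    convert hq using 2 <;> rw [norm_smul, mul_pow, Real.norm_eq_abs, sq_abs] <;> field_simp

theorem ViscSuper.zero_le_of_isMax_penalizedGap (hs : ViscSuper G s) (hh : 0 < h)
    (hmax : ∀ z' p', penalizedGap μ v s h z' p' ≤ penalizedGap μ v s h z p) :
    0 ≤ G z (s z) (∑ i, μ i • p i) := by
  refine hs.zero_le_of_hasGradientAt
    (φ := fun y => ∑ i, -(μ i / (2 * h)) * ‖y - (z + h • p i)‖ ^ 2)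
    (ContDiff.sum fun i _ => contDiff_const_mul_norm_sub_sq _ _) ?_ fun y => ?_
  · refine hasGradientAt_sum _ fun i _ => ?_
    convert hasGradientAt_const_mul_norm_sub_sq (-(μ i / (2 * h))) (z + h • p i) z using 1
    rw [sub_add_cancel_left, smul_neg, smul_smul, ← neg_smul]
    field_simp
  · have hpoint : ∀ y i, y + h • (p i + h⁻¹ • (z - y)) = z + h • p i := fun y i => by
      rw [smul_add, smul_inv_smul₀ hh.ne']
      abel
    have hnorm : ∀ y i, h / 2 * ‖p i + h⁻¹ • (z - y)‖ ^ 2 =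
        1 / (2 * h) * ‖y - (z + h • p i)‖ ^ 2 := fun y i => by
      rw [← hpoint y i, sub_add_cancel_left, norm_neg, norm_smul, mul_pow, Real.norm_eq_abs,
        sq_abs]
      field_simp
    have hgap : ∀ y, penalizedGap μ v s h y (fun i => p i + h⁻¹ • (z - y)) =
        ∑ i, μ i * v i (z + h • p i) -
          (s y - ∑ i, -(μ i / (2 * h)) * ‖y - (z + h • p i)‖ ^ 2) := fun y => by
      rw [penalizedGap, sub_sub_eq_add_sub, ← Finset.sum_add_distrib]
      congr 1
      refine Finset.sum_congr rfl fun i _ => ?_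
      rw [hpoint, hnorm]
      ring
    have hz := hgap z
    simp only [sub_self, smul_zero, add_zero] at hz
    have hy := hmax y fun i => p i + h⁻¹ • (z - y)
    rw [hgap, hz] at hy
    exact (sub_le_sub_iff_left _).1 hy

theorem isClosed_setOf_isContactPoint (hv : ∀ i, Continuous (v i)) (hs : Continuous s)
    (hF : ∀ i, Continuous fun q : 𝔼 n × ℝ × 𝔼 n => F i q.1 q.2.1 q.2.2)
    (hG : Continuous fun q : 𝔼 n × ℝ × 𝔼 n => G q.1 q.2.1 q.2.2) :
    IsClosed {q : ℝ × 𝔼 n × (ι → 𝔼 n) | IsContactPoint F G μ v s q.1 q.2.1 q.2.2} := by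
  have hsetOf : {q : ℝ × 𝔼 n × (ι → 𝔼 n) | IsContactPoint F G μ v s q.1 q.2.1 q.2.2} =
      {q | ∀ x, ∑ i, μ i * v i x - s x ≤ ∑ i, μ i * v i (q.2.1 + q.1 • q.2.2 i) - s q.2.1} ∩
      ({q | ∀ i, F i (q.2.1 + q.1 • q.2.2 i) (v i (q.2.1 + q.1 • q.2.2 i)) (q.2.2 i) ≤ 0} ∩
      {q | 0 ≤ G q.2.1 (s q.2.1) (∑ i, μ i • q.2.2 i)}) :=
    ext fun q => ⟨fun hq => ⟨hq.1, hq.2, hq.3⟩, fun hq => ⟨hq.1, hq.2.1, hq.2.2⟩⟩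
  rw [hsetOf, ofPred_forall, ofPred_forall]
  refine (isClosed_iInter fun x => ?_).inter ((isClosed_iInter fun i => ?_).inter ?_)
  · exact isClosed_le (by fun_prop) (by fun_prop)
  · exact isClosed_le ((hF i).comp (f := fun q : ℝ × 𝔼 n × (ι → 𝔼 n) =>
      (q.2.1 + q.1 • q.2.2 i, v i (q.2.1 + q.1 • q.2.2 i), q.2.2 i)) (by fun_prop))
      continuous_const
  · exact isClosed_le continuous_const (hG.comp (f := fun q : ℝ × 𝔼 n × (ι → 𝔼 n) =>
      (q.2.1, s q.2.1, ∑ i, μ i • q.2.2 i)) (by fun_prop))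

theorem exists_isContactPoint (hμ : ∀ i, 0 < μ i) (hv : ∀ i, IsTorusSubsolution (F i) (v i))
    (hs : IsTorusSupersolution G s)
    (hF : ∀ i, Continuous fun q : 𝔼 n × ℝ × 𝔼 n => F i q.1 q.2.1 q.2.2)
    (hG : Continuous fun q : 𝔼 n × ℝ × 𝔼 n => G q.1 q.2.1 q.2.2) {R : ι → ℝ}
    (hR : ∀ i x p, F i x (v i x) p ≤ 0 → ‖p‖ ≤ R i) :
    ∃ z p, IsContactPoint F G μ v s 0 z p := by
  let C : Set (𝔼 n × (ι → 𝔼 n)) :=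
    Metric.closedBall 0 √n ×ˢ univ.pi fun i => Metric.closedBall 0 (R i)
  have hC : IsCompact C :=
    (isCompact_closedBall _ _).prod (isCompact_univ_pi fun i => isCompact_closedBall _ _)
  have hclosed : IsClosed {h | ∃ q ∈ C, IsContactPoint F G μ v s h q.1 q.2} :=
    isClosed_setOf_exists_mem_of_isCompact hC
      (isClosed_setOf_isContactPoint (fun i => (hv i).continuous) hs.continuous hF hG)
  have hpos : Ioi 0 ⊆ {h | ∃ q ∈ C, IsContactPoint F G μ v s h q.1 q.2} := by
    intro h hh
    obtain ⟨z, hz, p, hmax⟩ := exists_isMax_penalizedGap hμ hh (fun i => (hv i).continuous)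
      (fun i => (hv i).periodic) hs.continuous hs.periodic
    have hsub := fun i => (hv i).viscSub.le_zero_of_isMax_penalizedGap (hμ i) hh hmax
    refine ⟨(z, p), ⟨hz, fun i _ => mem_closedBall_zero_iff.2 (hR i _ _ (hsub i))⟩, ?_, hsub, ?_⟩
    · exact gap_le_of_isMax_penalizedGap (fun i => (hμ i).le) (le_of_lt hh) hmax
    · exact hs.viscSuper.zero_le_of_isMax_penalizedGap hh hmax
  obtain ⟨q, -, hq⟩ : (0 : ℝ) ∈ {h | ∃ q ∈ C, IsContactPoint F G μ v s h q.1 q.2} :=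
    closure_minimal hpos hclosed (by simp)
  exact ⟨q.1, q.2, hq⟩

end Doubling

section Comparison

variable {n : ℕ} {H : 𝔼 n → 𝔼 n → ℝ}

/-- The discounted equation `c u + H(x, Du) = 0`; `c = 0` is the ergodic equation. -/
def discounted (H : 𝔼 n → 𝔼 n → ℝ) (c : ℝ) (x : 𝔼 n) (r : ℝ) (p : 𝔼 n) : ℝ :=
  c * r + H x p

/-- Coercivity: `H(x, p) → +∞` as `|p| → ∞`, uniformly in `x`. -/
def UniformlyCoercive (H : 𝔼 n → 𝔼 n → ℝ) : Prop :=
  ∀ C : ℝ, ∃ R : ℝ, ∀ x p : 𝔼 n, R ≤ ‖p‖ → C ≤ H x p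

theorem discounted_zero : discounted H 0 = fun x _ p => H x p := by
  ext
  simp [discounted]

theorem continuous_discounted (hH : Continuous fun q : 𝔼 n × 𝔼 n => H q.1 q.2) (c : ℝ) :
    Continuous fun q : 𝔼 n × ℝ × 𝔼 n => discounted H c q.1 q.2.1 q.2.2 := by
  have := hH.comp (f := fun q : 𝔼 n × ℝ × 𝔼 n => (q.1, q.2.2)) (by fun_prop)
  exact Continuous.add (by fun_prop) this

theorem UniformlyCoercive.exists_norm_le (hH : UniformlyCoercive H) (C : ℝ) :
    ∃ R, 0 < R ∧ ∀ c x r p, |c * r| ≤ C → discounted H c x r p ≤ 0 → ‖p‖ ≤ R := by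
  obtain ⟨R, hR⟩ := hH (C + 1)
  refine ⟨max R 1, by positivity, fun c x r p hr hle => ?_⟩
  by_contra! hp
  have hHp := hR x p ((le_max_left _ _).trans hp.le)
  rw [discounted] at hle
  linarith [neg_le_of_abs_le hr]

theorem IsTorusSubsolution.exists_norm_le (hH : UniformlyCoercive H) {c : ℝ} {v : 𝔼 n → ℝ}
    (hv : IsTorusSubsolution (discounted H c) v) :
    ∃ R, ∀ x p, discounted H c x (v x) p ≤ 0 → ‖p‖ ≤ R := by
  obtain ⟨B, hB⟩ := hv.periodic.exists_abs_le hv.continuous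
  obtain ⟨R, -, hR⟩ := hH.exists_norm_le (|c| * B)
  refine ⟨R, fun x p => hR c x (v x) p ?_⟩
  rw [abs_mul]
  exact mul_le_mul_of_nonneg_left (hB x) (abs_nonneg c)

theorem exists_isMax_sub_and_mul_le_mul (hcont : Continuous fun q : 𝔼 n × 𝔼 n => H q.1 q.2)
    (hcoer : UniformlyCoercive H) {c d : ℝ} {v s : 𝔼 n → ℝ}
    (hv : IsTorusSubsolution (discounted H c) v)
    (hs : IsTorusSupersolution (discounted H d) s) :
    ∃ z, (∀ x, v x - s x ≤ v z - s z) ∧ c * v z ≤ d * s z := by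
  obtain ⟨R, hR⟩ := hv.exists_norm_le hcoer
  obtain ⟨z, p, hz⟩ := exists_isContactPoint (μ := fun _ : Unit => 1) (fun _ => one_pos)
    (fun _ => hv) hs (fun _ => continuous_discounted hcont c) (continuous_discounted hcont d)
    fun _ => hR
  have hgap := hz.gap_le
  have hsub := hz.sub_le ()
  have hsuper := hz.super_ge
  simp only [zero_smul, add_zero, Finset.univ_unique, Finset.sum_singleton, one_mul, one_smul,
    discounted, PUnit.default_eq_unit] at hgap hsub hsuper
  exact ⟨z, hgap, by linarith⟩

theorem exists_isMax_sum_sub_and_exp_le_sum_exp {ι : Type*} [Fintype ι]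
    (hcont : Continuous fun q : 𝔼 n × 𝔼 n => H q.1 q.2) (hcoer : UniformlyCoercive H) {k : ℝ}
    (hconv : ∀ x, ConvexOn ℝ univ fun p => Real.exp (k * H x p)) (hk : 0 ≤ k) {μ c : ι → ℝ}
    (hμ : ∀ i, 0 < μ i) (hμsum : ∑ i, μ i = 1) {d : ℝ} {v : ι → 𝔼 n → ℝ} {s : 𝔼 n → ℝ}
    (hv : ∀ i, IsTorusSubsolution (discounted H (c i)) (v i))
    (hs : IsTorusSupersolution (discounted H d) s) :
    ∃ z, (∀ x, ∑ i, μ i * v i x - s x ≤ ∑ i, μ i * v i z - s z) ∧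
      Real.exp (-(k * (d * s z))) ≤ ∑ i, μ i * Real.exp (-(k * (c i * v i z))) := by
  choose R hR using fun i => (hv i).exists_norm_le hcoer
  obtain ⟨z, p, hz⟩ := exists_isContactPoint hμ hv hs
    (fun i => continuous_discounted hcont (c i)) (continuous_discounted hcont d) hR
  have hgap := hz.gap_le
  have hsub := hz.sub_le
  have hsuper := hz.super_ge
  simp only [zero_smul, add_zero, discounted] at hgap hsub hsuper
  refine ⟨z, hgap, ?_⟩
  calc Real.exp (-(k * (d * s z))) ≤ Real.exp (k * H z (∑ i, μ i • p i)) := by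
        rw [← mul_neg]
        gcongr
        linarith
    _ ≤ ∑ i, μ i * Real.exp (k * H z (p i)) :=
        (hconv z).map_sum_le (fun i _ => (hμ i).le) hμsum fun i _ => mem_univ _
    _ ≤ ∑ i, μ i * Real.exp (-(k * (c i * v i z))) := by
        refine Finset.sum_le_sum fun i _ => ?_
        rw [← mul_neg]
        gcongr
        · exact (hμ i).le
        · linarith [hsub i]

theorem sub_le_of_discounted_of_lt (hcont : Continuous fun q : 𝔼 n × 𝔼 n => H q.1 q.2)
    (hcoer : UniformlyCoercive H) {k : ℝ}
    (hconv : ∀ x, ConvexOn ℝ univ fun p => Real.exp (k * H x p)) (hk : 0 < k)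
    {ε δ : ℝ} (hε : 0 < ε) (hεδ : ε < δ) {v vδ vε : 𝔼 n → ℝ}
    (hv : IsTorusSubsolution (discounted H 0) v)
    (hvδ : IsTorusSubsolution (discounted H δ) vδ)
    (hvε : IsTorusSupersolution (discounted H ε) vε)
    {B : ℝ} (hB : ∀ x, |vδ x| ≤ B) (hBsmall : k * δ * B ≤ 1)
    {θ : ℝ} (hθ : ∀ x, |v x - vδ x| ≤ θ) (x : 𝔼 n) :
    v x - vε x ≤ θ + k * δ * B ^ 2 := by
  have hδ : 0 < δ := hε.trans hεδ
  have ht : 0 < ε / δ := div_pos hε hδ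
  have ht1 : 0 < 1 - ε / δ := sub_pos.2 ((div_lt_one hδ).2 hεδ)
  obtain ⟨z, hz, hexp⟩ := exists_isMax_sum_sub_and_exp_le_sum_exp hcont hcoer hconv hk.le
    (μ := ![1 - ε / δ, ε / δ]) (c := ![0, δ]) (v := ![v, vδ])
    (Fin.forall_fin_two.2 ⟨ht1, ht⟩) (by simp) (Fin.forall_fin_two.2 ⟨hv, hvδ⟩) hvε
  simp only [Fin.sum_univ_two, Matrix.cons_val_zero, Matrix.cons_val_one, zero_mul, mul_zero,
    neg_zero, Real.exp_zero, mul_one] at hz hexp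
  have habs : |k * (δ * vδ z)| ≤ 1 := by
    rw [← mul_assoc, abs_mul, abs_of_pos (mul_pos hk hδ)]
    exact (mul_le_mul_of_nonneg_left (hB z) (mul_pos hk hδ).le).trans hBsmall
  have hcontact : k * (δ * vδ z) - (k * (δ * vδ z)) ^ 2 ≤ k * (δ * vε z) := by
    refine sub_sq_le_of_exp_neg_mul_le ht habs ?_
    convert hexp using 3
    field_simp
  have hsq : vδ z ^ 2 ≤ B ^ 2 := sq_le_sq' (neg_le_of_abs_le (hB z)) (le_of_abs_le (hB z))
  have hz_gap : vδ z - vε z ≤ k * δ * B ^ 2 := by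
    have : k * δ * (vδ z - vε z) ≤ k * δ * (k * δ * vδ z ^ 2) := by linarith
    exact (le_of_mul_le_mul_left this (mul_pos hk hδ)).trans (by gcongr)
  have hx := mul_le_mul_of_nonneg_left (le_of_abs_le (hθ x)) ht.le
  have hz_close := mul_le_mul_of_nonneg_left (le_of_abs_le (hθ z)) ht1.le
  linarith [hz x]

end Comparison

section Stability

theorem tendstoUniformly_comp_fst {ι κ X Y : Type*} [UniformSpace Y] {v : ι → X → Y} {v₀ : X → Y}
    {l : Filter ι} (h : TendstoUniformly v v₀ l) (l' : Filter κ) :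
    TendstoUniformly (fun q : ι × κ => v q.1) v₀ (l ×ˢ l') :=
  fun s hs => tendsto_fst.eventually (h s hs)

variable {n : ℕ} {ι : Type*} {l : Filter ι} [l.NeBot]
  {F : ι → 𝔼 n → ℝ → 𝔼 n → ℝ} {F₀ : 𝔼 n → ℝ → 𝔼 n → ℝ} {v : ι → 𝔼 n → ℝ} {v₀ : 𝔼 n → ℝ}

theorem ViscSub.of_tendstoUniformly
    (hF : ∀ x r p, Tendsto (fun q : ι × 𝔼 n × ℝ × 𝔼 n => F q.1 q.2.1 q.2.2.1 q.2.2.2)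
      (l ×ˢ 𝓝 (x, r, p)) (𝓝 (F₀ x r p)))
    (hv : ∀ i, Continuous (v i)) (hsub : ∀ i, ViscSub (F i) (v i))
    (hlim : TendstoUniformly v v₀ l) : ViscSub F₀ v₀ := by
  intro φ hφ x₀ hmax
  -- adding `‖x - x₀‖²` makes the maximum strict without changing the gradient at `x₀`
  set ψ : 𝔼 n → ℝ := fun x => φ x + 1 * ‖x - x₀‖ ^ 2
  have hψ : ContDiff ℝ 1 ψ := hφ.add (contDiff_const_mul_norm_sub_sq 1 x₀)
  have hgrad : gradient ψ x₀ = gradient φ x₀ := by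
    have := (hasGradientAt_add (hφ.differentiable one_ne_zero x₀).hasGradientAt
      (hasGradientAt_const_mul_norm_sub_sq 1 x₀ x₀)).gradient
    simpa only [sub_self, smul_zero, add_zero] using this
  have hstrict : ∀ᶠ x in 𝓝 x₀, (v₀ - ψ) x + dist x x₀ ^ 2 ≤ (v₀ - ψ) x₀ := by
    filter_upwards [hmax] with x hx
    have hx' : v₀ x - φ x ≤ v₀ x₀ - φ x₀ := hx
    simp only [Pi.sub_apply, ψ, sub_self, norm_zero, dist_eq_norm]
    linarith
  have hlimψ : TendstoUniformly (fun i => v i - ψ) (v₀ - ψ) l := by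
    rw [Metric.tendstoUniformly_iff] at hlim ⊢
    simpa using hlim
  have hcont : Continuous v₀ := hlim.continuous (.of_forall hv)
  have htendsto : Tendsto (fun q : ι × 𝔼 n => F q.1 q.2 (v q.1 q.2) (gradient ψ q.2))
      (l ×ˢ 𝓝 x₀) (𝓝 (F₀ x₀ (v₀ x₀) (gradient φ x₀))) := by
    have hval : Tendsto (fun q : ι × 𝔼 n => v q.1 q.2) (l ×ˢ 𝓝 x₀) (𝓝 (v₀ x₀)) :=
      (tendstoUniformly_comp_fst hlim _).tendsto_comp hcont.continuousAt tendsto_snd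
    have hslope : Tendsto (fun q : ι × 𝔼 n => gradient ψ q.2) (l ×ˢ 𝓝 x₀)
        (𝓝 (gradient φ x₀)) := hgrad ▸ ((continuous_gradient hψ).tendsto x₀).comp tendsto_snd
    exact (hF x₀ (v₀ x₀) (gradient φ x₀)).comp
      (tendsto_fst.prodMk (tendsto_snd.prodMk_nhds (hval.prodMk_nhds hslope)))
  by_contra! hpos
  obtain ⟨S, hS, U, hU, hSU⟩ := eventually_prod_iff.1 (htendsto.eventually_const_lt hpos)
  obtain ⟨i, hi, x, hx, hx_max⟩ := (hS.and (eventually_exists_isLocalMax_of_tendstoUniformly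
    (fun i => (hv i).sub hψ.continuous) hlimψ hstrict hU)).exists
  exact (hSU hi hx).not_ge (hsub i ψ hψ x hx_max)

theorem viscSuper_iff_viscSub_neg {F : 𝔼 n → ℝ → 𝔼 n → ℝ} {v : 𝔼 n → ℝ} :
    ViscSuper F v ↔ ViscSub (fun x r p => -F x (-r) (-p)) (-v) := by
  refine ⟨fun h φ hφ x hmax => ?_, fun h φ hφ x hmin => ?_⟩
  · have hmin : IsLocalMin (v - -φ) x := hmax.neg.congr (.of_forall fun y => by simp; ring)
    simpa [gradient_neg] using h (-φ) hφ.neg x hmin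
  · have hmax : IsLocalMax (-v - -φ) x := hmin.neg.congr (.of_forall fun y => by simp; ring)
    simpa [gradient_neg] using h (-φ) hφ.neg x hmax

theorem ViscSuper.of_tendstoUniformly
    (hF : ∀ x r p, Tendsto (fun q : ι × 𝔼 n × ℝ × 𝔼 n => F q.1 q.2.1 q.2.2.1 q.2.2.2)
      (l ×ˢ 𝓝 (x, r, p)) (𝓝 (F₀ x r p)))
    (hv : ∀ i, Continuous (v i)) (hsuper : ∀ i, ViscSuper (F i) (v i))
    (hlim : TendstoUniformly v v₀ l) : ViscSuper F₀ v₀ := by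
  rw [viscSuper_iff_viscSub_neg]
  refine ViscSub.of_tendstoUniformly (l := l) (v := fun i => -v i) (fun x r p => ?_)
    (fun i => (hv i).neg) (fun i => viscSuper_iff_viscSub_neg.1 (hsuper i)) ?_
  · exact ((hF x (-r) (-p)).comp (tendsto_fst.prodMk
      (Tendsto.comp (g := fun q : 𝔼 n × ℝ × 𝔼 n => (q.1, -q.2.1, -q.2.2))
        (Continuous.tendsto (by fun_prop) (x, r, p)) tendsto_snd))).neg
  · rw [Metric.tendstoUniformly_iff] at hlim ⊢
    simpa using hlim

end Stability

section Compactness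

variable {n : ℕ} {ι : Type*} {u : ι → 𝔼 n → ℝ} {v : 𝔼 n → ℝ}

theorem tendstoUniformly_of_tendstoUniformlyOn_closedBall {l : Filter ι}
    (hu : ∀ i, ZnPeriodic (u i)) (hv : ZnPeriodic v)
    (h : TendstoUniformlyOn u v l (Metric.closedBall 0 √n)) : TendstoUniformly u v l := by
  intro s hs
  filter_upwards [h s hs] with i hi x
  obtain ⟨k, hk⟩ := exists_add_latticeVec_mem_closedBall x
  rw [← hu i x k, ← hv x k]
  exact hi _ hk

theorem ZnPeriodic.of_tendsto {l : Filter ι} [l.NeBot] (hu : ∀ i, ZnPeriodic (u i))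
    (h : ∀ x, Tendsto (fun i => u i x) l (𝓝 (v x))) : ZnPeriodic v := fun x k =>
  tendsto_nhds_unique (h _) ((h x).congr fun i => (hu i x k).symm)

theorem exists_tendstoUniformly_of_lipschitzWith {L : NNReal} {B : ℝ} (V : Ultrafilter ι)
    (hlip : ∀ i, LipschitzWith L (u i)) (hper : ∀ i, ZnPeriodic (u i))
    (hB : ∀ i x, |u i x| ≤ B) : ∃ v, ZnPeriodic v ∧ TendstoUniformly u v V := by
  have hptwise : ∀ x, ∃ r, Tendsto (fun i => u i x) V (𝓝 r) := fun x => by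
    obtain ⟨r, -, hr⟩ := (isCompact_Icc (a := -B) (b := B)).ultrafilter_le_nhds
      (V.map fun i => u i x) (le_principal_iff.2 (mem_map.2 (univ_mem' fun i => abs_le.1 (hB i x))))
    exact ⟨r, hr⟩
  choose v hv using hptwise
  have hvper : ZnPeriodic v := .of_tendsto hper hv
  refine ⟨v, hvper, tendstoUniformly_of_tendstoUniformlyOn_closedBall hper hvper ?_⟩
  have hequi : Equicontinuous u := (LipschitzWith.uniformEquicontinuous u L hlip).equicontinuous
  exact UniformOnFun.tendsto_iff_tendstoUniformlyOn.1
    ((EquicontinuousOn.tendsto_uniformOnFun_iff_pi (𝔖 := {K | IsCompact K}) (fun _ hK => hK)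
      (sUnion_eq_univ_iff.2 fun x => ⟨{x}, isCompact_singleton, rfl⟩)
      (fun K _ => hequi.equicontinuousOn K) V v).2 (tendsto_pi_nhds.2 hv))
    _ (isCompact_closedBall _ _)

end Compactness

section Selection

variable {n : ℕ} {H : 𝔼 n → 𝔼 n → ℝ}

theorem exists_forall_abs_le_of_discounted (hcont : Continuous fun q : 𝔼 n × 𝔼 n => H q.1 q.2)
    (hcoer : UniformlyCoercive H) {w : 𝔼 n → ℝ} (hwsub : IsTorusSubsolution (discounted H 0) w)
    (hwsuper : IsTorusSupersolution (discounted H 0) w) :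
    ∃ B, ∀ ε, 0 < ε → ∀ v, IsTorusSubsolution (discounted H ε) v →
      IsTorusSupersolution (discounted H ε) v → ∀ x, |v x| ≤ B := by
  obtain ⟨M, hM⟩ := hwsub.periodic.exists_abs_le hwsub.continuous
  refine ⟨2 * M, fun ε hε v hsub hsuper x => abs_le.2 ⟨?_, ?_⟩⟩
  · obtain ⟨z, hz, hle⟩ := exists_isMax_sub_and_mul_le_mul hcont hcoer hwsub hsuper
    have hvz : 0 ≤ v z := nonneg_of_mul_nonneg_right (by linarith) hε
    linarith [hz x, neg_le_of_abs_le (hM x), le_of_abs_le (hM z)]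
  · obtain ⟨z, hz, hle⟩ := exists_isMax_sub_and_mul_le_mul hcont hcoer hsub hwsuper
    have hvz : v z ≤ 0 := nonpos_of_mul_nonpos_right (by linarith) hε
    linarith [hz x, le_of_abs_le (hM x), neg_le_of_abs_le (hM z)]

theorem UniformlyCoercive.exists_lipschitzWith (hcoer : UniformlyCoercive H) (B : ℝ) :
    ∃ L, ∀ ε ∈ Ioc (0 : ℝ) 1, ∀ v, IsTorusSubsolution (discounted H ε) v →
      (∀ x, |v x| ≤ B) → LipschitzWith L v := by
  obtain ⟨R, hR, hgrad⟩ := hcoer.exists_norm_le B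
  refine ⟨_, fun ε hε v hv hB => lipschitzWith_of_norm_gradient_le hv.continuous
    ⟨B, forall_mem_range.2 fun x => le_of_abs_le (hB x)⟩ hR fun φ hφ x hmax =>
      hgrad ε x (v x) _ ?_ (hv.viscSub φ hφ x hmax)⟩
  rw [abs_mul, abs_of_pos hε.1]
  exact (mul_le_of_le_one_left (abs_nonneg _) hε.2).trans (hB x)

variable {ι : Type*} {u : ι → 𝔼 n → ℝ} {ε : ι → ℝ} {v v' : 𝔼 n → ℝ} {l l' : Filter ι}

theorem tendsto_discounted (hcont : Continuous fun q : 𝔼 n × 𝔼 n => H q.1 q.2)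
    (hε : Tendsto ε l (𝓝 0)) (x : 𝔼 n) (r : ℝ) (p : 𝔼 n) :
    Tendsto (fun q : ι × 𝔼 n × ℝ × 𝔼 n => discounted H (ε q.1) q.2.1 q.2.2.1 q.2.2.2)
      (l ×ˢ 𝓝 (x, r, p)) (𝓝 (discounted H 0 x r p)) :=
  ((hε.comp tendsto_fst).mul (((continuous_fst.comp continuous_snd).tendsto _).comp
    tendsto_snd)).add (((hcont.comp (f := fun q : 𝔼 n × ℝ × 𝔼 n => (q.1, q.2.2))
      (by fun_prop)).tendsto _).comp tendsto_snd)

variable [l.NeBot] [l'.NeBot]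

theorem IsTorusSubsolution.of_tendstoUniformly
    (hcont : Continuous fun q : 𝔼 n × 𝔼 n => H q.1 q.2) (hε : Tendsto ε l (𝓝 0))
    (hu : ∀ i, IsTorusSubsolution (discounted H (ε i)) (u i)) (hlim : TendstoUniformly u v l) :
    IsTorusSubsolution (discounted H 0) v where
  continuous := hlim.continuous (.of_forall fun i => (hu i).continuous)
  periodic := .of_tendsto (fun i => (hu i).periodic) hlim.tendsto_at
  viscSub := .of_tendstoUniformly (tendsto_discounted hcont hε) (fun i => (hu i).continuous)
    (fun i => (hu i).viscSub) hlim

theorem IsTorusSupersolution.of_tendstoUniformly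
    (hcont : Continuous fun q : 𝔼 n × 𝔼 n => H q.1 q.2) (hε : Tendsto ε l (𝓝 0))
    (hu : ∀ i, IsTorusSupersolution (discounted H (ε i)) (u i)) (hlim : TendstoUniformly u v l) :
    IsTorusSupersolution (discounted H 0) v where
  continuous := hlim.continuous (.of_forall fun i => (hu i).continuous)
  periodic := .of_tendsto (fun i => (hu i).periodic) hlim.tendsto_at
  viscSuper := .of_tendstoUniformly (tendsto_discounted hcont hε) (fun i => (hu i).continuous)
    (fun i => (hu i).viscSuper) hlim

theorem le_of_tendstoUniformly_of_discounted
    (hcont : Continuous fun q : 𝔼 n × 𝔼 n => H q.1 q.2) (hcoer : UniformlyCoercive H) {k : ℝ}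
    (hconv : ∀ x, ConvexOn ℝ univ fun p => Real.exp (k * H x p)) (hk : 0 < k)
    (hε : ∀ i, 0 < ε i) (hεl : Tendsto ε l (𝓝 0)) (hεl' : Tendsto ε l' (𝓝 0))
    (hsub : ∀ i, IsTorusSubsolution (discounted H (ε i)) (u i))
    (hsuper : ∀ i, IsTorusSupersolution (discounted H (ε i)) (u i))
    {B : ℝ} (hB : ∀ i x, |u i x| ≤ B)
    (hv : TendstoUniformly u v l) (hv' : TendstoUniformly u v' l') : v ≤ v' := by
  intro x
  refine le_of_forall_pos_le_add fun θ hθ => ?_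
  have hvsub : IsTorusSubsolution (discounted H 0) v := .of_tendstoUniformly hcont hεl hsub hv
  have hscale : Tendsto (fun i => k * ε i * B) l (𝓝 0) := by
    simpa using (hεl.const_mul k).mul_const B
  have herror : Tendsto (fun i => θ + k * ε i * B ^ 2) l (𝓝 θ) := by
    simpa using ((hεl.const_mul k).mul_const (B ^ 2)).const_add θ
  have hle : ∀ᶠ i in l, v x - v' x ≤ θ + k * ε i * B ^ 2 := by
    filter_upwards [hscale.eventually_le_const one_pos, Metric.tendstoUniformly_iff.1 hv θ hθ]
      with i hi_small hi_close
    refine le_of_tendsto ((hv'.tendsto_at x).const_sub (v x)) ?_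
    filter_upwards [hεl'.eventually_lt_const (hε i)] with j hj
    exact sub_le_of_discounted_of_lt hcont hcoer hconv hk (hε j) hj hvsub (hsub i) (hsuper j)
      (hB i) hi_small (fun y => (hi_close y).le) x
  linarith [ge_of_tendsto herror hle]

theorem exists_tendstoUniformly_of_discounted
    (hcont : Continuous fun q : 𝔼 n × 𝔼 n => H q.1 q.2) (hcoer : UniformlyCoercive H) {k : ℝ}
    (hconv : ∀ x, ConvexOn ℝ univ fun p => Real.exp (k * H x p)) (hk : 0 < k)
    (hε : ∀ i, 0 < ε i) (hεl : Tendsto ε l (𝓝 0))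
    (hsub : ∀ i, IsTorusSubsolution (discounted H (ε i)) (u i))
    (hsuper : ∀ i, IsTorusSupersolution (discounted H (ε i)) (u i))
    {B : ℝ} (hB : ∀ i x, |u i x| ≤ B) {L : NNReal} (hL : ∀ i, LipschitzWith L (u i)) :
    ∃ v, TendstoUniformly u v l := by
  have hcluster := fun V : Ultrafilter ι =>
    exists_tendstoUniformly_of_lipschitzWith V hL (fun i => (hsub i).periodic) hB
  have hle : ∀ {V V' : Ultrafilter ι} {v v'}, ↑V ≤ l → ↑V' ≤ l → TendstoUniformly u v V →
      TendstoUniformly u v' V' → v ≤ v' := fun hV hV' =>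
    le_of_tendstoUniformly_of_discounted hcont hcoer hconv hk hε (hεl.mono_left hV)
      (hεl.mono_left hV') hsub hsuper hB
  obtain ⟨v, -, hv⟩ := hcluster (.of l)
  refine ⟨v, fun s hs => mem_iff_ultrafilter.2 fun V hV => ?_⟩
  obtain ⟨v', -, hv'⟩ := hcluster V
  obtain rfl : v = v' := le_antisymm (hle (Ultrafilter.of_le l) hV hv hv')
    (hle hV (Ultrafilter.of_le l) hv' hv)
  exact hv' s hs

end Selection

theorem stmt1_general {n : ℕ} {H : 𝔼 n → 𝔼 n → ℝ}
    (hcont : Continuous fun q : 𝔼 n × 𝔼 n => H q.1 q.2) (hcoer : UniformlyCoercive H)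
    {l₀ : ℝ} (hl₀ : 0 < l₀) (hconv : ∀ x, ConvexOn ℝ univ fun p => Real.exp (l₀ * H x p))
    (hErg : ∃ w, Continuous w ∧ ZnPeriodic w ∧ ViscSol (fun x _ p => H x p) w)
    (u : ℝ → 𝔼 n → ℝ)
    (hu : ∀ ε, 0 < ε → Continuous (u ε) ∧ ZnPeriodic (u ε) ∧
      ViscSol (fun x r p => ε * r + H x p) (u ε)) :
    ∃ u0 : 𝔼 n → ℝ, Continuous u0 ∧ ZnPeriodic u0 ∧ TendstoUniformly u u0 (𝓝[>] (0 : ℝ)) ∧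
      ViscSol (fun x _ p => H x p) u0 := by
  rw [← discounted_zero] at hErg ⊢
  obtain ⟨w, hw, hwper, hwsub, hwsuper⟩ := hErg
  have hsub : ∀ ε, 0 < ε → IsTorusSubsolution (discounted H ε) (u ε) := fun ε hε =>
    ⟨(hu ε hε).1, (hu ε hε).2.1, (hu ε hε).2.2.1⟩
  have hsuper : ∀ ε, 0 < ε → IsTorusSupersolution (discounted H ε) (u ε) := fun ε hε =>
    ⟨(hu ε hε).1, (hu ε hε).2.1, (hu ε hε).2.2.2⟩
  obtain ⟨B, hB⟩ := exists_forall_abs_le_of_discounted hcont hcoer ⟨hw, hwper, hwsub⟩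
    ⟨hw, hwper, hwsuper⟩
  have hB' : ∀ ε, 0 < ε → ∀ x, |u ε x| ≤ B := fun ε hε =>
    hB ε hε _ (hsub ε hε) (hsuper ε hε)
  obtain ⟨L, hL⟩ := hcoer.exists_lipschitzWith B
  -- the Lipschitz bound is uniform only for bounded `ε`, hence the index set `(0, 1]`
  let l : Filter (Ioc (0 : ℝ) 1) := comap Subtype.val (𝓝[>] 0)
  have hrange : range ((↑) : Ioc (0 : ℝ) 1 → ℝ) ∈ 𝓝[>] (0 : ℝ) :=
    Subtype.range_coe ▸ Ioc_mem_nhdsGT one_pos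
  have : l.NeBot := NeBot.comap_of_range_mem inferInstance hrange
  have hl : Tendsto ((↑) : Ioc (0 : ℝ) 1 → ℝ) l (𝓝 0) :=
    tendsto_comap.mono_right nhdsWithin_le_nhds
  obtain ⟨u₀, hlim⟩ := exists_tendstoUniformly_of_discounted hcont hcoer hconv hl₀
    (fun i => i.2.1) hl (fun i => hsub i i.2.1) (fun i => hsuper i i.2.1)
    (fun i => hB' i i.2.1) (fun i => hL i i.2 _ (hsub i i.2.1) (hB' i i.2.1))
  have hsub₀ := IsTorusSubsolution.of_tendstoUniformly hcont hl (fun i => hsub i i.2.1) hlim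
  have hsuper₀ := IsTorusSupersolution.of_tendstoUniformly hcont hl (fun i => hsuper i i.2.1) hlim
  refine ⟨u₀, hsub₀.continuous, hsub₀.periodic, ?_, hsub₀.viscSub, hsuper₀.viscSuper⟩
  rw [← map_comap_of_mem hrange]
  exact hlim

theorem stmt1 {n : ℕ}
    (H : EuclideanSpace ℝ (Fin n) → EuclideanSpace ℝ (Fin n) → ℝ)
    -- H ∈ C²(𝕋ⁿ × ℝⁿ)
    (hHsmooth : ContDiff ℝ 2 (fun q : EuclideanSpace ℝ (Fin n) × EuclideanSpace ℝ (Fin n) => H q.1 q.2))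
    (hHper : ∀ (x p : EuclideanSpace ℝ (Fin n)) (k : Fin n → ℤ),
      H (x + (EuclideanSpace.equiv (Fin n) ℝ).symm (fun i => (k i : ℝ))) p = H x p)
    -- coercivity: H(x,p) → +∞ as |p| → ∞, uniformly in x
    (hcoer : ∀ C : ℝ, ∃ R : ℝ, ∀ (x p : EuclideanSpace ℝ (Fin n)), R ≤ ‖p‖ → C ≤ H x p)
    (l₀ : ℝ) (hl₀ : 0 < l₀)
    -- (A4): sublevel sets are convex
    (hA4conv : ∀ (a : ℝ) (x : EuclideanSpace ℝ (Fin n)), Convex ℝ {p | H x p ≤ a})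
    -- (A4): l₀² D_pH ⊗ D_pH + l₀ D²_pp H ≥ 0
    (hA4mat : ∀ (x p v : EuclideanSpace ℝ (Fin n)),
      0 ≤ l₀ ^ 2 * (fderiv ℝ (H x) p v) ^ 2 + l₀ * (fderiv ℝ (fderiv ℝ (H x)) p v v))
    -- (A5): G(x,p) = e^{l₀ H(x,p)} satisfies (A1)
    (hA5 : ∀ C : ℝ, ∃ R : ℝ, ∀ (x p : EuclideanSpace ℝ (Fin n)), R ≤ ‖p‖ →
      C ≤ (Real.exp (l₀ * H x p)) ^ 2 / (2 * ‖p‖) -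
        ‖fderiv ℝ (fun y => Real.exp (l₀ * H y p)) x‖)
    -- the ergodic equation H(x,Du) = 0 has a continuous viscosity solution (H̄ = 0)
    (hErg : ∃ w : EuclideanSpace ℝ (Fin n) → ℝ, Continuous w ∧ ZnPeriodic w ∧
      ViscSol (fun x _ p => H x p) w)
    -- for each ε > 0, u ε is a continuous viscosity solution of ε uᵉ + H(x,Duᵉ) = 0
    (u : ℝ → EuclideanSpace ℝ (Fin n) → ℝ)
    (hu : ∀ ε : ℝ, 0 < ε → Continuous (u ε) ∧ ZnPeriodic (u ε) ∧
      ViscSol (fun x r p => ε * r + H x p) (u ε)) :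
    ∃ u0 : EuclideanSpace ℝ (Fin n) → ℝ, Continuous u0 ∧ ZnPeriodic u0 ∧
      TendstoUniformly u u0 (𝓝[>] (0 : ℝ)) ∧
      ViscSol (fun x _ p => H x p) u0 :=
  stmt1_general hHsmooth.continuous hcoer hl₀ (fun x => convexOn_exp_mul_of_contDiff
    (hHsmooth.comp (contDiff_const.prodMk contDiff_id)) (hA4mat x)) hErg u hu
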